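/- Let A be a U(1)-equivariant nondegenerate symmetric bilinear form on a finite-dimensional complex vector space W, where U(1) acts on W complex-linearly with no nonzero fixed vectors and A is invariant under the action. Then the index of A (as a real symmetric form on the underlying real vector space) is even. -/

import Mathlib

/-- The index of (the restriction to a subspace `W` of) a symmetric bilinear form `B`:
the maximal dimension of a subspace of `W` on which `B` is negative definite. -/
noncomputable def negIndexOn {V : Type*} [AddCommGroup V] [Module ℝ V]
    (B : V →ₗ[ℝ] V →ₗ[ℝ] ℝ) (W : Submodule ℝ V) : ℕ :=
  sSup {n : ℕ | ∃ U : Submodule ℝ V, U ≤ W ∧ Module.finrank ℝ U = n ∧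
    ∀ x ∈ U, x ≠ 0 → B x x < 0}

/-!
Let `X` be an invertible `ℂ`-linear operator that is skew-adjoint for `A`. In a real basis the
matrix of `(x, y) ↦ A x (X y)` is skew-symmetric, so its determinant, which is the product of the
determinants of the matrices of `A` and `X`, is nonnegative. The real determinant of the
`ℂ`-linear `X` is `|det X|² > 0`, hence `A` has positive determinant and therefore even index.

Such an `X` exists among the real combinations of the operators `ρ g - ρ g⁻¹`. They generate a
commutative Artinian algebra, in which a subspace consisting of nonunits lies in one of the
finitely many maximal ideals, since a real vector space is not a finite union of proper subspaces.
A maximal ideal of such an algebra kills a nonzero vector `w`; but `ρ g w = ρ g⁻¹ w` for all `g`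
means that `w` is fixed by all squares.
-/

open Module

section SkewSymmetricMatrix

open Matrix

variable {n : Type*} [Fintype n] {B : Matrix n n ℝ}

theorem dotProduct_mulVec_self_eq_zero_of_transpose_eq_neg (hB : Bᵀ = -B) (x : n → ℝ) :
    x ⬝ᵥ B *ᵥ x = 0 := by
  have eq_neg : x ⬝ᵥ B *ᵥ x = -(x ⬝ᵥ B *ᵥ x) := by
    conv_lhs => rw [dotProduct_mulVec, ← mulVec_transpose, dotProduct_comm, hB, neg_mulVec,
      dotProduct_neg]
  linarith

variable [DecidableEq n]

theorem det_smul_one_add_ne_zero_of_transpose_eq_neg (hB : Bᵀ = -B) {a : ℝ} (ha : a ≠ 0) :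
    (a • 1 + B).det ≠ 0 := by
  intro hdet
  obtain ⟨x, hx, hker⟩ := exists_mulVec_eq_zero_iff.mpr hdet
  have hquad : a * (x ⬝ᵥ x) = 0 := by
    simpa [add_mulVec, smul_mulVec, dotProduct_mulVec_self_eq_zero_of_transpose_eq_neg hB]
      using congrArg (x ⬝ᵥ ·) hker
  exact hx (dotProduct_self_eq_zero.mp ((mul_eq_zero.mp hquad).resolve_left ha))

theorem det_nonneg_of_transpose_eq_neg (hB : Bᵀ = -B) : 0 ≤ B.det := by
  by_contra! hneg
  let path : ℝ → ℝ := fun s => ((1 - s) • (1 : Matrix n n ℝ) + s • B).det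
  have hcont : Continuous path := by
    apply Continuous.matrix_det
    fun_prop
  have hzero : path 0 = 1 := by simp [path]
  have hone : path 1 = B.det := by simp [path]
  obtain ⟨s, -, hs⟩ : (0 : ℝ) ∈ path '' Set.Icc 0 1 :=
    intermediate_value_Icc' zero_le_one hcont.continuousOn
      ⟨hone ▸ hneg.le, hzero ▸ zero_le_one⟩
  have hs_ne : 1 - s ≠ 0 := by
    rw [sub_ne_zero]
    rintro rfl
    exact hneg.ne (hone ▸ hs)
  exact det_smul_one_add_ne_zero_of_transpose_eq_neg (B := s • B) (by simp [hB]) hs_ne hs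

end SkewSymmetricMatrix

theorem even_ncard_neg_of_prod_pos {ι R : Type*} [Fintype ι] [CommRing R] [LinearOrder R]
    [IsStrictOrderedRing R] {d : ι → R} (hd : 0 < ∏ i, d i) : Even {i | d i < 0}.ncard := by
  classical
  have prod_eq : ∏ i, d i = (-1) ^ {i | d i < 0}.ncard * ∏ i, |d i| := by
    calc ∏ i, d i = ∏ i, (if d i < 0 then -1 else 1) * |d i| := by
          refine Finset.prod_congr rfl fun i _ => ?_
          split_ifs with hi
          · simp [abs_of_neg hi]
          · simp [abs_of_nonneg (not_lt.mp hi)]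
      _ = (-1) ^ {i | d i < 0}.ncard * ∏ i, |d i| := by
          rw [Finset.prod_mul_distrib, Finset.prod_ite]
          simp [Set.ncard_eq_toFinset_card']
  by_contra hodd
  rw [prod_eq, (Nat.not_even_iff_odd.mp hodd).neg_one_pow, neg_one_mul, neg_pos] at hd
  exact hd.not_ge (Finset.prod_nonneg fun i _ => abs_nonneg (d i))

section Index

open LinearMap.BilinMap (toQuadraticMap)

variable {𝕜 V ι : Type*} [Field 𝕜] [AddCommGroup V] [Module 𝕜 V] {A : V →ₗ[𝕜] V →ₗ[𝕜] 𝕜}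

theorem exists_basis_isOrthoᵢ [Finite ι] [Invertible (2 : 𝕜)] (hA : A.IsSymm)
    (b : Basis ι 𝕜 V) : ∃ v : Basis ι 𝕜 V, A.IsOrthoᵢ v := by
  have := b.finiteDimensional_of_finite
  obtain ⟨v, hv⟩ := LinearMap.BilinForm.exists_orthogonal_basis hA
  let e := v.indexEquiv b
  refine ⟨v.reindex e, fun i j hij => ?_⟩
  simpa only [Function.onFun, Basis.reindex_apply] using hv (e.symm.injective.ne hij)

variable [LinearOrder 𝕜] [IsStrictOrderedRing 𝕜]

theorem sigNeg_toQuadraticMap_eq_ncard [Finite ι] (hA : A.IsSymm) (v : Basis ι 𝕜 V)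
    (hv : A.IsOrthoᵢ v) : sigNeg (toQuadraticMap A) = {i | A (v i) (v i) < 0}.ncard := by
  have := Fintype.ofFinite ι
  have : Invertible (2 : 𝕜) := invertibleOfNonzero two_ne_zero
  have hassoc : QuadraticMap.associated (R := 𝕜) (toQuadraticMap A) = A :=
    QuadraticMap.associated_left_inverse 𝕜 hA.eq
  have hrepr := QuadraticMap.basisRepr_eq_of_iIsOrtho (toQuadraticMap A) v (hassoc.symm ▸ hv)
  exact QuadraticForm.sigNeg_of_equiv_weightedSumSquares
    (hrepr ▸ ⟨(toQuadraticMap A).isometryEquivBasisRepr v⟩)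

theorem even_sigNeg_of_det_toMatrix_pos [Fintype ι] [DecidableEq ι] (hA : A.IsSymm)
    (b : Basis ι 𝕜 V) (hdet : 0 < (LinearMap.BilinForm.toMatrix b A).det) :
    Even (sigNeg (toQuadraticMap A)) := by
  have : Invertible (2 : 𝕜) := invertibleOfNonzero two_ne_zero
  obtain ⟨v, hv⟩ := exists_basis_isOrthoᵢ hA b
  have hdiag : LinearMap.BilinForm.toMatrix v A = Matrix.diagonal fun i => A (v i) (v i) := by
    ext i j
    rcases eq_or_ne i j with rfl | hij
    · simp
    · simpa [hij] using hv hij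
  have hprod : ∏ i, A (v i) (v i) =
      (b.toMatrix v).det ^ 2 * (LinearMap.BilinForm.toMatrix b A).det := by
    rw [← Matrix.det_diagonal, ← hdiag, ← LinearMap.BilinForm.toMatrix_mul_basis_toMatrix b,
      Matrix.det_mul, Matrix.det_mul, Matrix.det_transpose]
    ring
  rw [sigNeg_toQuadraticMap_eq_ncard hA v hv]
  apply even_ncard_neg_of_prod_pos
  rw [hprod]
  have := b.invertibleToMatrix v
  exact mul_pos (sq_pos_of_ne_zero (Matrix.isUnit_det_of_invertible _).ne_zero) hdet

theorem negIndexOn_top_eq_sigNeg {V : Type*} [AddCommGroup V] [Module ℝ V]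
    [FiniteDimensional ℝ V] (A : V →ₗ[ℝ] V →ₗ[ℝ] ℝ) :
    negIndexOn A ⊤ = sigNeg (toQuadraticMap A) := by
  rw [negIndexOn, ← (sigNeg_isGreatest (toQuadraticMap A)).csSup_eq]
  congr! 5 with n U
  simp [QuadraticMap.PosDef]

end Index

theorem det_toMatrix_mul_det_nonneg_of_isSkewAdjoint {ι V : Type*} [Fintype ι] [DecidableEq ι]
    [AddCommGroup V] [Module ℝ V] {A : V →ₗ[ℝ] V →ₗ[ℝ] ℝ} (hA : A.IsSymm) (b : Basis ι ℝ V)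
    {X : End ℝ V} (hX : A.IsSkewAdjoint X) :
    0 ≤ (LinearMap.BilinForm.toMatrix b A).det * LinearMap.det X := by
  rw [← LinearMap.det_toMatrix b X, ← Matrix.det_mul, ← LinearMap.BilinForm.toMatrix_compRight]
  apply det_nonneg_of_transpose_eq_neg
  ext i j
  have hskew : A (b j) (X (b i)) = -A (b i) (X (b j)) := by
    calc A (b j) (X (b i)) = A (X (b i)) (b j) := hA.eq _ _
      _ = -A (b i) (X (b j)) := by simpa using hX (b i) (b j)
  simpa using hskew

theorem det_restrictScalars_pos_of_isUnit {W : Type*} [AddCommGroup W] [Module ℂ W]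
    {X : End ℂ W} (hX : IsUnit X) : 0 < LinearMap.det (X.restrictScalars ℝ) := by
  rw [LinearMap.det_restrictScalars, Algebra.norm_complex_eq]
  exact Complex.normSq_pos.mpr (LinearMap.isUnit_det X hX).ne_zero

theorem even_negIndexOn_top_of_isSkewAdjoint {W : Type*} [AddCommGroup W] [Module ℂ W]
    [FiniteDimensional ℂ W] {A : W →ₗ[ℝ] W →ₗ[ℝ] ℝ} (hsymm : A.IsSymm)
    (hnd : A.Nondegenerate) {X : End ℂ W} (hX : IsUnit X)
    (hskew : A.IsSkewAdjoint X) : Even (negIndexOn A ⊤) := by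
  have : FiniteDimensional ℝ W := FiniteDimensional.complexToReal W
  let b := finBasis ℝ W
  have hdet : (LinearMap.BilinForm.toMatrix b A).det ≠ 0 :=
    (LinearMap.BilinForm.nondegenerate_iff_det_ne_zero b).mp hnd
  have hdet_nonneg : 0 ≤ (LinearMap.BilinForm.toMatrix b A).det :=
    nonneg_of_mul_nonneg_left (det_toMatrix_mul_det_nonneg_of_isSkewAdjoint hsymm b hskew)
      (det_restrictScalars_pos_of_isUnit hX)
  rw [negIndexOn_top_eq_sigNeg]
  exact even_sigNeg_of_det_toMatrix_pos hsymm b (hdet_nonneg.lt_of_ne' hdet)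

section CommutingOperators

theorem exists_ne_zero_forall_mem_smul_eq_zero_of_isArtinianRing {R M : Type*} [CommRing R]
    [IsArtinianRing R] [AddCommGroup M] [Module R M] [FaithfulSMul R M] (I : Ideal R)
    (hI : I ≠ ⊤) : ∃ m : M, m ≠ 0 ∧ ∀ r ∈ I, r • m = 0 := by
  obtain ⟨P, hP, hIP⟩ := I.exists_le_maximal hI
  have hass : P ∈ associatedPrimes R R :=
    associatedPrimes.minimalPrimes_annihilator_subset_associatedPrimes R R
      (IsArtinianRing.mem_minimalPrimes (by simp [Module.annihilator_eq_bot.mpr]))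
  obtain ⟨-, a, rfl⟩ := isAssociatedPrime_iff.mp hass
  have ha : a ≠ 0 := by
    rintro rfl
    exact hP.ne_top (by simp)
  obtain ⟨m, hm⟩ : ∃ m : M, a • m ≠ 0 := by
    by_contra! hann
    exact ha (FaithfulSMul.eq_of_smul_eq_smul fun m : M => by rw [hann m, zero_smul])
  refine ⟨a • m, hm, fun r hr => ?_⟩
  have hra : r * a = 0 := by simpa using hIP hr
  rw [smul_smul, hra, zero_smul]

variable {k : Type*} [Field k] [Infinite k]

theorem exists_isUnit_mem_or_exists_isMaximal_le {R : Type*} [CommRing R] [Algebra k R]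
    [Finite (MaximalSpectrum R)] (S : Submodule k R) :
    (∃ s ∈ S, IsUnit s) ∨ ∃ P : Ideal R, P.IsMaximal ∧ S ≤ P.restrictScalars k := by
  by_contra! ⟨hunit, hmax⟩
  have hcover : ⋃ P : MaximalSpectrum R,
      (((P.asIdeal.restrictScalars k).comap S.subtype : Submodule k S) : Set S) = Set.univ := by
    refine Set.eq_univ_of_forall fun s => ?_
    obtain ⟨P, hP, hsP⟩ := exists_max_ideal_of_mem_nonunits (hunit s s.2)
    exact Set.mem_iUnion.mpr ⟨⟨P, hP⟩, hsP⟩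
  obtain ⟨P, hP⟩ := Subspace.exists_eq_top_of_iUnion_eq_univ hcover
  exact hmax P.asIdeal P.isMaximal (Submodule.comap_subtype_eq_top.mp hP)

open scoped IsMulCommutative in
theorem exists_isUnit_mem_span_of_commute {K W : Type*} [Field K] [Algebra k K]
    [FiniteDimensional k K] [AddCommGroup W] [Module k W] [Module K W] [IsScalarTower k K W]
    [FiniteDimensional K W] {s : Set (End K W)} (hcomm : ∀ X ∈ s, ∀ Y ∈ s, X * Y = Y * X)
    (hker : ∀ w : W, (∀ X ∈ s, X w = 0) → w = 0) : ∃ X ∈ Submodule.span k s, IsUnit X := by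
  have := Algebra.isMulCommutative_adjoin k hcomm
  have : Module.Finite k (End K W) := Module.Finite.trans K _
  have : IsArtinianRing (Algebra.adjoin k s) := IsArtinianRing.of_finite k _
  let S : Submodule k (Algebra.adjoin k s) :=
    (Submodule.span k s).comap (Algebra.adjoin k s).val.toLinearMap
  obtain ⟨X, hX, hunit⟩ | ⟨P, hP, hSP⟩ := exists_isUnit_mem_or_exists_isMaximal_le S
  · exact ⟨X, hX, hunit.map (Algebra.adjoin k s).val⟩
  · obtain ⟨w, hw, hPw⟩ :=
      exists_ne_zero_forall_mem_smul_eq_zero_of_isArtinianRing (M := W) P hP.ne_top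
    refine absurd (hker w fun X hX => ?_) hw
    exact hPw ⟨X, Algebra.subset_adjoin hX⟩ (hSP (Submodule.subset_span hX))

end CommutingOperators

theorem isSkewAdjoint_sub_inv {G R K M : Type*} [Group G] [CommRing R] [Ring K] [AddCommGroup M]
    [Module R M] [Module K M] {A : M →ₗ[R] M →ₗ[R] R} (ρ : G →* End K M)
    (hinv : ∀ g x y, A (ρ g x) (ρ g y) = A x y) (g : G) :
    A.IsSkewAdjoint (ρ g - ρ g⁻¹ : End K M) := by
  have hadj (h : G) (x y : M) : A (ρ h x) y = A x (ρ h⁻¹ y) := by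
    rw [← hinv h x (ρ h⁻¹ y), ← End.mul_apply, ← map_mul, mul_inv_cancel, map_one, End.one_apply]
  intro x y
  simp [hadj g, hadj g⁻¹]

theorem exists_isUnit_isSkewAdjoint {G k K W : Type*} [CommGroup G] [Field k] [Infinite k]
    [Field K] [Algebra k K] [FiniteDimensional k K] [AddCommGroup W] [Module k W] [Module K W]
    [IsScalarTower k K W] [FiniteDimensional K W] {A : W →ₗ[k] W →ₗ[k] k} (ρ : G →* End K W)
    (hfix : ∀ w, (∀ g, ρ (g ^ 2) w = w) → w = 0)
    (hinv : ∀ g x y, A (ρ g x) (ρ g y) = A x y) :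
    ∃ X : End K W, IsUnit X ∧ A.IsSkewAdjoint X := by
  have hcomm : ∀ X ∈ Set.range fun g => ρ g - ρ g⁻¹, ∀ Y ∈ Set.range fun g => ρ g - ρ g⁻¹,
      X * Y = Y * X := by
    rintro _ ⟨g, rfl⟩ _ ⟨h, rfl⟩
    have hρ (a b : G) : Commute (ρ a) (ρ b) := (Commute.all a b).map ρ
    exact ((hρ _ _).sub_right (hρ _ _)).sub_left ((hρ _ _).sub_right (hρ _ _))
  have hker : ∀ w, (∀ X ∈ Set.range fun g => ρ g - ρ g⁻¹, X w = 0) → w = 0 := by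
    refine fun w hw => hfix w fun g => ?_
    have hg : ρ g w = ρ g⁻¹ w := sub_eq_zero.mp (hw _ ⟨g, rfl⟩)
    rw [pow_two, map_mul, End.mul_apply, hg, ← End.mul_apply, ← map_mul, mul_inv_cancel, map_one,
      End.one_apply]
  obtain ⟨X, hX, hunit⟩ := exists_isUnit_mem_span_of_commute (k := k) hcomm hker
  have hspan : Submodule.span k (Set.range fun g => ρ g - ρ g⁻¹) ≤
      A.skewAdjointSubmodule.comap (LinearMap.restrictScalarsₗ k K W W k) := by
    rw [Submodule.span_le]
    rintro _ ⟨g, rfl⟩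
    exact (LinearMap.mem_skewAdjointSubmodule _).mpr (isSkewAdjoint_sub_inv ρ hinv g)
  exact ⟨X, hunit, (LinearMap.mem_skewAdjointSubmodule _).mp (hspan hX)⟩

theorem circle_sq_surjective : Function.Surjective (· ^ 2 : Circle → Circle) := by
  intro u
  obtain ⟨θ, rfl⟩ := Circle.exp_surjective u
  refine ⟨Circle.exp (θ / 2), ?_⟩
  simp only [pow_two, ← Circle.exp_add, add_halves]

theorem equivariant_index_even_general {G W : Type*} [CommGroup G] [AddCommGroup W] [Module ℂ W]
    [FiniteDimensional ℂ W] (ρ : G →* End ℂ W) (hfix : ∀ w, (∀ g, ρ (g ^ 2) w = w) → w = 0)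
    {A : W →ₗ[ℝ] W →ₗ[ℝ] ℝ} (hsymm : A.IsSymm) (hnd : A.Nondegenerate)
    (hinv : ∀ g x y, A (ρ g x) (ρ g y) = A x y) : Even (negIndexOn A ⊤) := by
  obtain ⟨X, hunit, hskew⟩ := exists_isUnit_isSkewAdjoint ρ hfix hinv
  exact even_negIndexOn_top_of_isSkewAdjoint hsymm hnd hunit hskew

/-- If `W` is a finite-dimensional complex vector space with a complex-linear `U(1)`
action having no nonzero fixed vectors, and `A` is a `U(1)`-invariant nondegenerate
symmetric bilinear form on the underlying real vector space of `W`, then the index of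
`A` is even. -/
theorem equivariant_index_even
    (W : Type) [AddCommGroup W] [Module ℂ W] [FiniteDimensional ℂ W]
    (ρ : Circle →* (W →ₗ[ℂ] W))
    (hfix : ∀ w : W, (∀ u : Circle, ρ u w = w) → w = 0)
    (A : W →ₗ[ℝ] W →ₗ[ℝ] ℝ)
    (hsymm : ∀ x y : W, A x y = A y x)
    (hnd : ∀ x : W, (∀ y : W, A x y = 0) → x = 0)
    (hinv : ∀ (u : Circle) (x y : W), A (ρ u x) (ρ u y) = A x y) :
    Even (negIndexOn A ⊤) := by
  have hA : LinearMap.IsSymm A := ⟨hsymm⟩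
  have hfix_sq (w : W) (hw : ∀ t : Circle, ρ (t ^ 2) w = w) : w = 0 :=
    hfix w (circle_sq_surjective.forall.mpr hw)
  exact equivariant_index_even_general ρ hfix_sq hA
    (hA.isRefl.nondegenerate_iff_separatingLeft.mpr hnd) hinv
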